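/- The following two statements are equivalent: (i) for all integers d ≥ 1 and q ≥ 1, every continuous map f : Δ_{d-1}^{(d+1)(q-1)} → ℝ^d admits a winding partition (the Winding Number Conjecture); (ii) for all integers d ≥ 1 and q ≥ 1, every continuous map F : Δ^{(d+1)(q-1)} → ℝ^d admits a Tverberg partition (the Topological Tverberg Theorem). -/

import Mathlib

open scoped BigOperators

noncomputable section

/-- Euclidean space `ℝ^d`. -/
abbrev Euc (d : ℕ) : Type := EuclideanSpace ℝ (Fin d)

/-- The standard `N`-simplex `Δ^N ⊆ ℝ^{N+1}`. -/
def stdSimp (N : ℕ) : Set (Fin (N+1) → ℝ) :=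
  {x | (∀ i, 0 ≤ x i) ∧ ∑ i, x i = 1}

/-- The face `σ_S` of `Δ^N` spanned by the vertices in `S`. -/
def simpFace {N : ℕ} (S : Finset (Fin (N+1))) : Set (Fin (N+1) → ℝ) :=
  {x ∈ stdSimp N | ∀ i ∉ S, x i = 0}

/-- The `k`-skeleton `Δ_k^N` of the standard `N`-simplex. -/
def skel (N k : ℕ) : Set (Fin (N+1) → ℝ) :=
  {x ∈ stdSimp N | {i | x i ≠ 0}.ncard ≤ k + 1}

/-- A Tverberg partition for (the relevant restriction of) `f`: a set of `q`
pairwise disjoint nonempty vertex subsets whose faces have images with a common point. -/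
def IsTverbergPartition (q : ℕ) {N d : ℕ}
    (f : (Fin (N+1) → ℝ) → Euc d) (P : Finset (Finset (Fin (N+1)))) : Prop :=
  P.card = q ∧ (∀ S ∈ P, S.Nonempty) ∧
  (∀ S ∈ P, ∀ T ∈ P, S ≠ T → Disjoint S T) ∧
  (⋂ S ∈ P, f '' simpFace S).Nonempty

/-- The boundary `∂σ_S` of the face `σ_S`. -/
def simpFaceBoundary {N : ℕ} (S : Finset (Fin (N+1))) : Set (Fin (N+1) → ℝ) :=
  {x ∈ simpFace S | ∃ i ∈ S, x i = 0}

/-- `p ∈ W_{≠0}(f|_{∂σ_S})`: either `p` is in the image of the boundary, or the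
corestriction of `f|_{∂σ_S}` to `ℝ^d \ {p}` is not nullhomotopic (there is no
continuous map agreeing with `f` on `∂σ_S` that is homotopic to a constant). -/
def InWne (d : ℕ) {N : ℕ} (f : (Fin (N+1) → ℝ) → Euc d)
    (S : Finset (Fin (N+1))) (p : Euc d) : Prop :=
  p ∈ f '' simpFaceBoundary S ∨
  ¬ ∃ (g : C(↥(simpFaceBoundary S), ↥({p}ᶜ : Set (Euc d))))
      (y : ↥({p}ᶜ : Set (Euc d))),
      (∀ x : ↥(simpFaceBoundary S), (g x : Euc d) = f ↑x) ∧
      g.Homotopic (ContinuousMap.const _ y)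

/-- A winding partition (in dimension `d`) for `f` defined on the `(d-1)`-skeleton:
`q` pairwise disjoint nonempty vertex subsets, each of size at most `d+1`, together
with a winding point `p`. -/
def IsWindingPartition (d q : ℕ) {N : ℕ}
    (f : (Fin (N+1) → ℝ) → Euc d) (P : Finset (Finset (Fin (N+1)))) : Prop :=
  P.card = q ∧ (∀ S ∈ P, S.Nonempty) ∧ (∀ S ∈ P, S.card ≤ d + 1) ∧
  (∀ S ∈ P, ∀ T ∈ P, S ≠ T → Disjoint S T) ∧
  ∃ p : Euc d, ∀ S ∈ P,
    (S.card ≤ d → p ∈ f '' simpFace S) ∧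
    (S.card = d + 1 → InWne d f S p)

section Topology

/-- Two continuous functions on closed sets that agree on the overlap have a common continuous
extension. -/
theorem exists_continuous_extension_union {X E : Type*} [TopologicalSpace X] [NormalSpace X]
    [NormedAddCommGroup E] [NormedSpace ℝ E] [FiniteDimensional ℝ E] {A Z : Set X}
    (hA : IsClosed A) (hZ : IsClosed Z) {u v : X → E} (hu : ContinuousOn u A)
    (hv : ContinuousOn v Z) (huv : ∀ x ∈ A, x ∈ Z → u x = v x) :
    ∃ g : X → E, Continuous g ∧ (∀ x ∈ A, g x = u x) ∧ ∀ x ∈ Z, g x = v x := by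
  classical
  let w : X → E := fun x => if x ∈ Z then v x else u x
  have hwZ : ∀ x ∈ Z, w x = v x := fun x hx => if_pos hx
  have hwA : ∀ x ∈ A, w x = u x := fun x hx => by
    by_cases h : x ∈ Z
    · rw [hwZ x h, huv x hx h]
    · exact if_neg h
  have hw : ContinuousOn w (A ∪ Z) :=
    (hu.congr hwA).union_of_isClosed (hv.congr hwZ) hA hZ
  have : TietzeExtension E := TietzeExtension.of_tvs ℝ
  obtain ⟨g, hg⟩ := ContinuousMap.exists_restrict_eq (hA.union hZ)
    ⟨(A ∪ Z).domRestrict w, hw.domRestrict⟩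
  have hgw : ∀ x ∈ A ∪ Z, g x = w x := fun x hx => congrArg (fun k => k ⟨x, hx⟩) hg
  exact ⟨g, g.continuous, fun x hx => (hgw x (.inl hx)).trans (hwA x hx),
    fun x hx => (hgw x (.inr hx)).trans (hwZ x hx)⟩

/-- A continuous function on a closed set has a continuous extension. -/
theorem exists_continuous_extension {X E : Type*} [TopologicalSpace X] [NormalSpace X]
    [NormedAddCommGroup E] [NormedSpace ℝ E] [FiniteDimensional ℝ E] {A : Set X}
    (hA : IsClosed A) {u : X → E} (hu : ContinuousOn u A) :
    ∃ g : X → E, Continuous g ∧ ∀ x ∈ A, g x = u x := by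
  obtain ⟨g, hg, h, -⟩ := exists_continuous_extension_union hA hA hu hu fun _ _ _ => rfl
  exact ⟨g, hg, h⟩

/-- A continuous function on a closed set that is bounded by `ε` there has a continuous extension
that is bounded by `ε` everywhere. -/
theorem exists_continuous_extension_norm_le {X E : Type*} [TopologicalSpace X] [NormalSpace X]
    [NormedAddCommGroup E] [NormedSpace ℝ E] [FiniteDimensional ℝ E] {A : Set X}
    (hA : IsClosed A) {u : X → E} (hu : ContinuousOn u A) {ε : ℝ} (hε : 0 < ε)
    (hle : ∀ x ∈ A, ‖u x‖ ≤ ε) :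
    ∃ g : X → E, Continuous g ∧ (∀ x ∈ A, g x = u x) ∧ ∀ x, ‖g x‖ ≤ ε := by
  obtain ⟨g, hg, h⟩ := exists_continuous_extension hA hu
  have hpos : ∀ x, 0 < max ε ‖g x‖ := fun x => lt_max_of_lt_left hε
  refine ⟨fun x => (ε / max ε ‖g x‖) • g x, ?_, fun x hx => ?_, fun x => ?_⟩
  · exact (continuous_const.div (continuous_const.max hg.norm) fun x => (hpos x).ne').smul hg
  · have : max ε ‖g x‖ = ε := max_eq_left (by rw [h x hx]; exact hle x hx)
    simp only [this, div_self hε.ne', one_smul]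
    exact h x hx
  · rw [norm_smul, Real.norm_of_nonneg (div_nonneg hε.le (hpos x).le), div_mul_eq_mul_div,
      div_le_iff₀ (hpos x)]
    exact mul_le_mul_of_nonneg_left (le_max_right _ _) hε.le

/-- A bounded multiple of a continuous function that vanishes wherever the multiplier fails to be
continuous is continuous. -/
theorem continuous_smul_of_bounded {X E : Type*} [TopologicalSpace X]
    [NormedAddCommGroup E] [NormedSpace ℝ E] {θ : X → ℝ} {D : X → E} (hD : Continuous D)
    (hb : ∀ x, |θ x| ≤ 1) (hθ : ∀ x, D x ≠ 0 → ContinuousAt θ x) :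
    Continuous fun x => θ x • D x := by
  rw [continuous_iff_continuousAt]
  intro x
  by_cases hx : D x = 0
  · have : Filter.Tendsto (fun y => θ y • D y) (nhds x) (nhds 0) := by
      refine squeeze_zero_norm (a := fun y => ‖D y‖) (fun y => ?_) ?_
      · rw [norm_smul]
        exact mul_le_of_le_one_left (norm_nonneg _) (hb y)
      · simpa [hx] using (hD.norm).tendsto x
    simpa [ContinuousAt, hx] using this
  · exact (hθ x hx).smul hD.continuousAt

end Topology

section Simplex

variable {N : ℕ}

theorem isClosed_stdSimp : IsClosed (stdSimp N) := by
  have : stdSimp N = (⋂ i, {x | 0 ≤ x i}) ∩ {x | ∑ i, x i = 1} := by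
    ext x; simp [stdSimp]
  rw [this]
  exact (isClosed_iInter fun i => isClosed_le continuous_const (continuous_apply i)).inter
    (isClosed_eq (by fun_prop) continuous_const)

theorem le_one_of_mem_stdSimp {x : Fin (N+1) → ℝ} (hx : x ∈ stdSimp N) (i : Fin (N+1)) :
    x i ≤ 1 :=
  hx.2 ▸ Finset.single_le_sum (f := x) (fun j _ => hx.1 j) (Finset.mem_univ i)

theorem isCompact_stdSimp : IsCompact (stdSimp N) := by
  refine (isCompact_univ_pi fun _ : Fin (N+1) =>
    isCompact_Icc (a := (0 : ℝ)) (b := 1)).of_isClosed_subset isClosed_stdSimp fun x hx i _ => ⟨hx.1 i, le_one_of_mem_stdSimp hx i⟩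

theorem isClosed_simpFace (S : Finset (Fin (N+1))) : IsClosed (simpFace S) := by
  have : simpFace S = stdSimp N ∩ ⋂ i, ⋂ (_ : i ∉ S), {x | x i = 0} := by
    ext x; simp [simpFace]
  rw [this]
  exact isClosed_stdSimp.inter (isClosed_iInter fun i => isClosed_iInter fun _ =>
    isClosed_eq (continuous_apply i) continuous_const)

theorem simpFace_subset_stdSimp (S : Finset (Fin (N+1))) : simpFace S ⊆ stdSimp N :=
  fun _ hx => hx.1

theorem isCompact_simpFace (S : Finset (Fin (N+1))) : IsCompact (simpFace S) :=
  isCompact_stdSimp.of_isClosed_subset (isClosed_simpFace S) (simpFace_subset_stdSimp S)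

theorem isClosed_exists_mem_eq_zero (S : Finset (Fin (N+1))) :
    IsClosed {x : Fin (N+1) → ℝ | ∃ i ∈ S, x i = 0} := by
  have : {x : Fin (N+1) → ℝ | ∃ i ∈ S, x i = 0} = ⋃ i ∈ S, {x | x i = 0} := by
    ext x; simp
  rw [this]
  exact S.finite_toSet.isClosed_biUnion fun i _ =>
    isClosed_eq (continuous_apply i) continuous_const

theorem isClosed_simpFaceBoundary (S : Finset (Fin (N+1))) : IsClosed (simpFaceBoundary S) :=
  (isClosed_simpFace S).inter (isClosed_exists_mem_eq_zero S)

theorem sum_eq_one_of_mem_simpFace {S : Finset (Fin (N+1))} {x : Fin (N+1) → ℝ}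
    (hx : x ∈ simpFace S) : ∑ i ∈ S, x i = 1 := by
  rw [← hx.1.2]
  exact Finset.sum_subset (Finset.subset_univ S) fun i _ hi => hx.2 i hi

/-- The points with at most `d` nonzero coordinates form a closed set. -/
theorem isClosed_ncard_ne_zero_le (d : ℕ) :
    IsClosed {x : Fin (N+1) → ℝ | {i | x i ≠ 0}.ncard ≤ d} := by
  have : {x : Fin (N+1) → ℝ | {i | x i ≠ 0}.ncard ≤ d} =
      ⋃ S ∈ {S : Finset (Fin (N+1)) | S.card ≤ d}, ⋂ i, ⋂ (_ : i ∉ S), {x | x i = 0} := by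
    ext x
    simp only [Set.mem_ofPred_eq, Set.mem_iUnion, Set.mem_iInter, exists_prop]
    constructor
    · intro h
      refine ⟨Finset.univ.filter fun i => x i ≠ 0, ?_, fun i hi => by simpa using hi⟩
      rwa [← Set.ncard_coe_finset, Finset.coe_filter_univ]
    · rintro ⟨S, hS, h⟩
      refine le_trans ?_ hS
      rw [← Set.ncard_coe_finset]
      exact Set.ncard_le_ncard (fun i hi => by_contra fun h' => hi (h i h'))
  rw [this]
  exact (Set.toFinite _).isClosed_biUnion fun S _ => isClosed_iInter fun i =>
    isClosed_iInter fun _ => isClosed_eq (continuous_apply i) continuous_const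

theorem isClosed_skel (k : ℕ) : IsClosed (skel N k) :=
  isClosed_stdSimp.inter (isClosed_ncard_ne_zero_le (k + 1))

theorem simpFace_subset_skel {S : Finset (Fin (N+1))} {d : ℕ} (hd : 1 ≤ d) (hS : S.card ≤ d) :
    simpFace S ⊆ skel N (d - 1) := by
  intro x hx
  refine ⟨hx.1, ?_⟩
  rw [Nat.sub_add_cancel hd]
  refine le_trans ?_ hS
  rw [← Set.ncard_coe_finset]
  exact Set.ncard_le_ncard (fun i hi => by_contra fun h' => hi (hx.2 i h'))

theorem simpFaceBoundary_subset_skel {S : Finset (Fin (N+1))} {d : ℕ} (hd : 1 ≤ d)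
    (hS : S.card ≤ d + 1) : simpFaceBoundary S ⊆ skel N (d - 1) := by
  rintro x ⟨hx, i, hi, hxi⟩
  refine simpFace_subset_skel hd (S := S.erase i) ?_ ⟨hx.1, fun j hj => ?_⟩
  · rw [Finset.card_erase_of_mem hi]; omega
  · by_cases h : j = i
    · rwa [h]
    · exact hx.2 j fun hjS => hj (Finset.mem_erase.2 ⟨h, hjS⟩)

theorem segment_mem_simpFace {S : Finset (Fin (N+1))} {x y : Fin (N+1) → ℝ} (hx : x ∈ simpFace S)
    (hy : y ∈ simpFace S) {t : ℝ} (ht0 : 0 ≤ t) (ht1 : t ≤ 1) :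
    (1 - t) • x + t • y ∈ simpFace S := by
  refine ⟨⟨fun i => ?_, ?_⟩, fun i hi => ?_⟩
  · have := mul_nonneg (sub_nonneg.2 ht1) (hx.1.1 i)
    have := mul_nonneg ht0 (hy.1.1 i)
    simp only [Pi.add_apply, Pi.smul_apply, smul_eq_mul]; linarith
  · simp only [Pi.add_apply, Pi.smul_apply, smul_eq_mul, Finset.sum_add_distrib,
      ← Finset.mul_sum, hx.1.2, hy.1.2]; ring
  · simp [hx.2 i hi, hy.2 i hi]

theorem simpFace_nonempty {S : Finset (Fin (N+1))} (hS : S.Nonempty) : (simpFace S).Nonempty := by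
  obtain ⟨i, hi⟩ := hS
  refine ⟨Pi.single i 1, ⟨fun j => ?_, by simp⟩, fun j hj => ?_⟩
  · by_cases h : j = i
    · subst h; simp
    · simp [h]
  · exact Pi.single_eq_of_ne (fun h : j = i => hj (h ▸ hi)) _

end Simplex

section Winding

variable {N d : ℕ}

/-- If `f` on `∂σ_S` extends to `σ_S` without hitting `p`, then `p ∉ W_{≠0}(f|_{∂σ_S})`. -/
theorem not_inWne_of_extension {f G : (Fin (N+1) → ℝ) → Euc d} {S : Finset (Fin (N+1))}
    {p : Euc d} (hS : S.Nonempty) (hG : ContinuousOn G (simpFace S))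
    (hGf : ∀ x ∈ simpFaceBoundary S, G x = f x) (hp : ∀ x ∈ simpFace S, G x ≠ p) :
    ¬ InWne d f S p := by
  rw [InWne, not_or, not_not]
  refine ⟨?_, ?_⟩
  · rintro ⟨x, hx, rfl⟩
    exact hp x hx.1 (hGf x hx)
  obtain ⟨b, hb⟩ := simpFace_nonempty hS
  have hmem : ∀ z : unitInterval × simpFaceBoundary S,
      (1 - (z.1 : ℝ)) • (z.2 : Fin (N+1) → ℝ) + (z.1 : ℝ) • b ∈ simpFace S := fun z =>
    segment_mem_simpFace z.2.2.1 hb z.1.2.1 z.1.2.2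
  have hcont : Continuous fun z : unitInterval × simpFaceBoundary S =>
      G ((1 - (z.1 : ℝ)) • (z.2 : Fin (N+1) → ℝ) + (z.1 : ℝ) • b) :=
    hG.comp_continuous (by fun_prop) hmem
  refine ⟨⟨fun x => ⟨G x, hp _ x.2.1⟩, ?_⟩, ⟨G b, hp _ hb⟩, fun x => hGf x x.2, ⟨?_⟩⟩
  · exact (hG.comp_continuous continuous_subtype_val fun x => x.2.1).subtype_mk _
  · exact
      { toFun := fun z => ⟨_, hp _ (hmem z)⟩
        continuous_toFun := hcont.subtype_mk _
        map_zero_left := fun x => by simp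
        map_one_left := fun x => by simp }

/-- If `p ∉ W_{≠0}(f|_{∂σ_S})`, then `f` on `∂σ_S` has a continuous extension whose values on `σ_S`
avoid `p`. -/
theorem exists_extension_of_not_inWne {f : (Fin (N+1) → ℝ) → Euc d} {S : Finset (Fin (N+1))}
    {p : Euc d} (hS : S.Nonempty) (h : ¬ InWne d f S p) :
    ∃ G : (Fin (N+1) → ℝ) → Euc d, Continuous G ∧ (∀ x ∈ simpFaceBoundary S, G x = f x) ∧
      ∀ x ∈ simpFace S, G x ≠ p := by
  classical
  rw [InWne, not_or, not_not] at h
  obtain ⟨-, g, y, hgf, ⟨H⟩⟩ := h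
  let u : (Fin (N+1) → ℝ) × ℝ → Euc d := fun z =>
    if h : z.1 ∈ simpFaceBoundary S then (H (Set.projIcc 0 1 zero_le_one z.2, ⟨z.1, h⟩) : Euc d)
    else 0
  have hu : ContinuousOn u (simpFaceBoundary S ×ˢ Set.univ) := by
    rw [continuousOn_iff_continuous_domRestrict]
    have : (simpFaceBoundary S ×ˢ Set.univ).domRestrict u =
        fun z : (simpFaceBoundary S ×ˢ (Set.univ : Set ℝ) : Set _) =>
          (H (Set.projIcc 0 1 zero_le_one z.1.2, ⟨z.1.1, z.2.1⟩) : Euc d) := by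
      funext z
      exact dif_pos z.2.1
    rw [this]
    refine continuous_subtype_val.comp (H.continuous.comp (Continuous.prodMk ?_ ?_))
    · exact continuous_projIcc.comp (by fun_prop)
    · exact Continuous.subtype_mk (by fun_prop) _
  obtain ⟨E, hE, hEu, hEy⟩ := exists_continuous_extension_union
    ((isClosed_simpFaceBoundary S).prod isClosed_univ)
    (isClosed_le continuous_const continuous_snd : IsClosed {z : (Fin (N+1) → ℝ) × ℝ | 1 ≤ z.2})
    hu (v := fun _ => (y : Euc d)) continuousOn_const (by
      rintro ⟨x, t⟩ ⟨hx, -⟩ ht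
      have ht' : (1 : ℝ) ≤ t := ht
      have : Set.projIcc 0 1 zero_le_one t = 1 := Set.projIcc_of_right_le _ ht'
      simp only [u, dif_pos hx, this]
      simp)
  let m : (Fin (N+1) → ℝ) → ℝ := fun x => S.inf' hS x
  have hm : Continuous m := Continuous.finset_inf'_apply hS fun i _ => continuous_apply i
  let M : (Fin (N+1) → ℝ) → ℝ := fun x => S.card * m x
  have hM : Continuous M := continuous_const.mul hm
  let ρ : (Fin (N+1) → ℝ) → (Fin (N+1) → ℝ) := fun x i =>
    (max (1 - M x) (1 / 2))⁻¹ * (x i - if i ∈ S then m x else 0)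
  have hρ : Continuous ρ := by
    refine continuous_pi fun i => Continuous.mul (Continuous.inv₀ (by fun_prop) fun x => ?_) ?_
    · exact (lt_max_of_lt_right (by norm_num)).ne'
    · split_ifs <;> fun_prop
  refine ⟨fun x => E (ρ x, 2 * M x), by fun_prop, fun x hx => ?_, fun x hx => ?_⟩
  · obtain ⟨hxS, i, hi, hxi⟩ := hx
    have hm0 : m x = 0 := le_antisymm (hxi ▸ Finset.inf'_le x hi)
      (Finset.le_inf' _ _ fun j _ => hxS.1.1 j)
    have hM0 : M x = 0 := by simp [M, hm0]
    have hρx : ρ x = x := by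
      funext j
      have : max (1 - M x) (1 / 2) = 1 := by rw [hM0]; norm_num
      simp only [ρ, this, hm0]; simp
    have hx' : x ∈ simpFaceBoundary S := ⟨hxS, i, hi, hxi⟩
    simp only [hρx, hM0]
    rw [hEu _ ⟨hx', trivial⟩]
    simp [u, dif_pos hx', hgf]
  · change E (ρ x, 2 * M x) ≠ p
    rcases le_or_gt 1 (2 * M x) with h1 | h1
    · have : E (ρ x, 2 * M x) = y := hEy _ h1
      rw [this]
      exact y.2
    · have hmax : max (1 - M x) (1 / 2) = 1 - M x := max_eq_left (by linarith)
      have hpos : 0 < 1 - M x := by linarith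
      have hmx : ∀ i ∈ S, m x ≤ x i := fun i hi => Finset.inf'_le x hi
      have hb : ρ x ∈ simpFaceBoundary S := by
        refine ⟨⟨⟨fun i => ?_, ?_⟩, fun i hi => ?_⟩, ?_⟩
        · simp only [ρ, hmax]
          refine mul_nonneg (inv_nonneg.2 hpos.le) ?_
          split_ifs with hi
          · exact sub_nonneg.2 (hmx i hi)
          · simpa using hx.1.1 i
        · simp only [ρ, hmax, ← Finset.mul_sum, Finset.sum_sub_distrib, hx.1.2]
          simp only [Finset.sum_ite_mem, Finset.univ_inter, Finset.sum_const, nsmul_eq_mul]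
          exact inv_mul_cancel₀ hpos.ne'
        · simp [ρ, hi, hx.2 i hi]
        · obtain ⟨i, hi, him⟩ := Finset.exists_mem_eq_inf' hS x
          refine ⟨i, hi, ?_⟩
          have : m x = x i := him
          simp [ρ, hi, this]
      rw [hEu _ ⟨hb, trivial⟩]
      simp only [u, dif_pos hb]
      exact (H (Set.projIcc 0 1 zero_le_one (2 * M x), ⟨ρ x, hb⟩)).2

/-- Winding numbers are stable: if `p ∉ W_{≠0}(f|_{∂σ_S})`, the same holds for all nearby points and
maps. -/
theorem exists_forall_not_inWne {f : (Fin (N+1) → ℝ) → Euc d} {S : Finset (Fin (N+1))}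
    {p : Euc d} (hS : S.Nonempty) (hf : ContinuousOn f (simpFaceBoundary S))
    (h : ¬ InWne d f S p) :
    ∃ ε > 0, ∀ g : (Fin (N+1) → ℝ) → Euc d, ContinuousOn g (simpFaceBoundary S) →
      (∀ x ∈ simpFaceBoundary S, dist (g x) (f x) ≤ ε) → ∀ p', dist p' p ≤ ε →
      ¬ InWne d g S p' := by
  obtain ⟨G, hG, hGf, hGp⟩ := exists_extension_of_not_inWne hS h
  have hpos : ∀ x ∈ simpFace S, 0 < dist (G x) p := fun x hx => dist_pos.2 (hGp x hx)
  obtain ⟨x₀, hx₀, hmin⟩ := (isCompact_simpFace S).exists_isMinOn (simpFace_nonempty hS)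
    (hG.dist continuous_const : Continuous fun x => dist (G x) p).continuousOn
  have hr := hpos x₀ hx₀
  refine ⟨dist (G x₀) p / 3, by positivity, fun g hg hgf p' hp' => ?_⟩
  obtain ⟨e, he, heg, hle⟩ := exists_continuous_extension_norm_le (isClosed_simpFaceBoundary S)
    (hg.sub hf) (ε := dist (G x₀) p / 3) (by positivity)
    (fun x hx => by simpa [dist_eq_norm] using hgf x hx)
  refine not_inWne_of_extension hS (G := fun x => G x + e x) (by fun_prop) (fun x hx => ?_)
    fun x hx hxp => ?_
  · simp [hGf x hx, heg x hx]
  · have h1 : dist (G x₀) p ≤ dist (G x) p := hmin hx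
    have h2 : dist (G x) p ≤ dist (G x) (G x + e x) + dist p' p := by
      rw [hxp]; exact dist_triangle _ _ _
    have h3 : dist (G x) (G x + e x) ≤ dist (G x₀) p / 3 := by simpa using hle x
    linarith

/-- A winding partition of a map that extends continuously to the whole simplex is a Tverberg
partition. -/
theorem IsWindingPartition.isTverbergPartition {q : ℕ} {F : (Fin (N+1) → ℝ) → Euc d}
    (hF : ContinuousOn F (stdSimp N)) {P : Finset (Finset (Fin (N+1)))}
    (h : IsWindingPartition d q F P) : IsTverbergPartition q F P := by
  obtain ⟨hq, hne, hcard, hdisj, p, hp⟩ := h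
  refine ⟨hq, hne, hdisj, p, ?_⟩
  simp only [Set.mem_iInter]
  intro S hS
  rcases (hcard S hS).lt_or_eq with h | h
  · exact (hp S hS).1 (Nat.lt_succ_iff.1 h)
  · by_contra hnot
    exact not_inWne_of_extension (hne S hS) (hF.mono (simpFace_subset_stdSimp S))
      (fun _ _ => rfl) (fun x hx hxp => hnot ⟨x, hx, hxp⟩) ((hp S hS).2 h)

/-- If a family of disjoint nonempty sets of size at most `d + 1` has `q` members and the ground set
has fewer than `q (d + 1)` elements, some member has size at most `d`. -/
theorem exists_card_le_of_card_lt {V : Type*} [Fintype V] [DecidableEq V] {q d : ℕ}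
    {P : Finset (Finset V)} (hq : P.card = q)
    (hdisj : ∀ S ∈ P, ∀ T ∈ P, S ≠ T → Disjoint S T) (hV : Fintype.card V < q * (d + 1)) :
    ∃ S ∈ P, S.card ≤ d := by
  by_contra! h
  have h1 : (P.biUnion id).card = ∑ S ∈ P, S.card := Finset.card_biUnion hdisj
  have h2 : P.card • (d + 1) ≤ ∑ S ∈ P, S.card := Finset.card_nsmul_le_sum _ _ _ h
  have h3 : (P.biUnion id).card ≤ Fintype.card V := Finset.card_le_univ _
  rw [hq, smul_eq_mul] at h2
  omega

/-- Having no winding partition is an open condition. -/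
theorem exists_forall_not_isWindingPartition {q : ℕ} (hd : 1 ≤ d) (hN : N + 1 < q * (d + 1))
    {f : (Fin (N+1) → ℝ) → Euc d} (hf : ContinuousOn f (skel N (d - 1)))
    (h : ¬ ∃ P, IsWindingPartition d q f P) :
    ∃ ε > 0, ∀ g : (Fin (N+1) → ℝ) → Euc d, ContinuousOn g (skel N (d - 1)) →
      (∀ x ∈ skel N (d - 1), dist (g x) (f x) ≤ ε) → ¬ ∃ P, IsWindingPartition d q g P := by
  suffices H : ∀ P : Finset (Finset (Fin (N+1))), ∃ ε > 0, ∀ g : (Fin (N+1) → ℝ) → Euc d,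
      ContinuousOn g (skel N (d - 1)) → (∀ x ∈ skel N (d - 1), dist (g x) (f x) ≤ ε) →
      ¬ IsWindingPartition d q g P by
    choose ε hε hg using H
    refine ⟨Finset.univ.inf' Finset.univ_nonempty ε, ?_, ?_⟩
    · simpa [Finset.lt_inf'_iff] using hε
    · rintro g hgc hgf ⟨P, hP⟩
      exact hg P g hgc (fun x hx => (hgf x hx).trans (Finset.inf'_le _ (Finset.mem_univ P))) hP
  intro P
  by_cases hP : P.card = q ∧ (∀ S ∈ P, S.Nonempty) ∧ (∀ S ∈ P, S.card ≤ d + 1) ∧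
      (∀ S ∈ P, ∀ T ∈ P, S ≠ T → Disjoint S T)
  swap
  · exact ⟨1, one_pos, fun g _ _ hg => hP ⟨hg.1, hg.2.1, hg.2.2.1, hg.2.2.2.1⟩⟩
  obtain ⟨hq, hne, hcard, hdisj⟩ := hP
  obtain ⟨S₀, hS₀, hS₀d⟩ := exists_card_le_of_card_lt (d := d) hq hdisj (by simpa using hN)
  have hS₀f : IsCompact (f '' simpFace S₀) :=
    (isCompact_simpFace S₀).image_of_continuousOn (hf.mono (simpFace_subset_skel hd hS₀d))
  have hK : IsCompact (Metric.cthickening 1 (f '' simpFace S₀)) := hS₀f.cthickening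
  have key : ∃ ε > 0, ∀ p' ∈ Metric.cthickening 1 (f '' simpFace S₀),
      ∀ g : (Fin (N+1) → ℝ) → Euc d,
      ContinuousOn g (skel N (d - 1)) → (∀ x ∈ skel N (d - 1), dist (g x) (f x) ≤ ε) →
      ¬ ∀ S ∈ P, (S.card ≤ d → p' ∈ g '' simpFace S) ∧ (S.card = d + 1 → InWne d g S p') := by
    refine hK.induction_on (p := fun s => ∃ ε > 0, ∀ p' ∈ s, ∀ g : (Fin (N+1) → ℝ) → Euc d,
      ContinuousOn g (skel N (d - 1)) → (∀ x ∈ skel N (d - 1), dist (g x) (f x) ≤ ε) →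
      ¬ ∀ S ∈ P, (S.card ≤ d → p' ∈ g '' simpFace S) ∧ (S.card = d + 1 → InWne d g S p'))
      ⟨1, one_pos, by simp⟩ ?_ ?_ ?_
    · rintro s t hst ⟨ε, hε, H⟩
      exact ⟨ε, hε, fun p' hp' => H p' (hst hp')⟩
    · rintro s t ⟨ε, hε, H⟩ ⟨ε', hε', H'⟩
      refine ⟨min ε ε', lt_min hε hε', ?_⟩
      rintro p' (hp' | hp') g hg hgf
      · exact H p' hp' g hg fun x hx => (hgf x hx).trans (min_le_left _ _)
      · exact H' p' hp' g hg fun x hx => (hgf x hx).trans (min_le_right _ _)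
    · intro p _
      have hp : ∃ S ∈ P, (S.card ≤ d ∧ p ∉ f '' simpFace S) ∨
          (S.card = d + 1 ∧ ¬ InWne d f S p) := by
        by_contra! hcon
        exact h ⟨P, hq, hne, hcard, hdisj, p, hcon⟩
      obtain ⟨S, hS, ⟨hSd, hpS⟩ | ⟨hSd, hpS⟩⟩ := hp
      · have hSf : IsClosed (f '' simpFace S) := ((isCompact_simpFace S).image_of_continuousOn
          (hf.mono (simpFace_subset_skel hd hSd))).isClosed
        obtain ⟨r, hr, hball⟩ := Metric.isOpen_iff.1 hSf.isOpen_compl p hpS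
        refine ⟨Metric.ball p (r / 2), mem_nhdsWithin_of_mem_nhds
          (Metric.ball_mem_nhds p (by positivity)), r / 2, by positivity, ?_⟩
        intro p' hp' g _ hgf hall
        obtain ⟨x, hx, rfl⟩ := (hall S hS).1 hSd
        refine hball (?_ : f x ∈ Metric.ball p r) ⟨x, hx, rfl⟩
        have h1 := hgf x (simpFace_subset_skel hd hSd hx)
        have h2 := Metric.mem_ball.1 hp'
        have h3 := dist_triangle_left (f x) p (g x)
        rw [Metric.mem_ball]
        linarith
      · have hsub : simpFaceBoundary S ⊆ skel N (d - 1) := simpFaceBoundary_subset_skel hd hSd.le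
        obtain ⟨ε, hε, H⟩ := exists_forall_not_inWne (hne S hS) (hf.mono hsub) hpS
        refine ⟨Metric.ball p ε, mem_nhdsWithin_of_mem_nhds (Metric.ball_mem_nhds p hε), ε, hε, ?_⟩
        intro p' hp' g hg hgf hall
        exact H g (hg.mono hsub) (fun x hx => hgf x (hsub hx)) p' (Metric.mem_ball.1 hp').le
          ((hall S hS).2 hSd)
  obtain ⟨ε, hε, H⟩ := key
  refine ⟨min ε 1, lt_min hε one_pos, fun g hg hgf hP => ?_⟩
  obtain ⟨p', hp'⟩ := hP.2.2.2.2
  refine H p' ?_ g hg (fun x hx => (hgf x hx).trans (min_le_left _ _)) hp'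
  obtain ⟨x, hx, rfl⟩ := (hp' S₀ hS₀).1 hS₀d
  exact Metric.mem_cthickening_of_dist_le _ (f x) _ _ ⟨x, hx, rfl⟩
    ((hgf x (simpFace_subset_skel hd hS₀d hx)).trans (min_le_right _ _))

end Winding

section Sard

open MeasureTheory

/-- **Sard's theorem** for maps into a space of at least the same dimension: almost every value is
attained only finitely often on each compact set, and not at all if the dimension of the target is
larger. -/
theorem ae_finite_fiber {M A : Type*} [NormedAddCommGroup M] [NormedSpace ℝ M]
    [FiniteDimensional ℝ M] [NormedAddCommGroup A] [NormedSpace ℝ A] [FiniteDimensional ℝ A]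
    [MeasurableSpace A] [BorelSpace A] (μ : Measure A) [μ.IsAddHaarMeasure] {Φ : M → A}
    (hΦ : ContDiff ℝ 1 Φ) (hdim : Module.finrank ℝ M ≤ Module.finrank ℝ A) :
    ∀ᵐ a ∂μ, (∀ K : Set M, IsCompact K → (K ∩ Φ ⁻¹' {a}).Finite) ∧
      (Module.finrank ℝ M < Module.finrank ℝ A → ∀ m, Φ m ≠ a) := by
  obtain ⟨j, hj⟩ := finrank_le_iff_exists_linearMap.1 hdim
  obtain ⟨π₀, hπ₀⟩ := j.exists_leftInverse_of_injective (LinearMap.ker_eq_bot.2 hj)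
  let π : A →L[ℝ] M := π₀.toContinuousLinearMap
  have hπ : Function.Surjective π := fun m => ⟨j m, LinearMap.congr_fun hπ₀ m⟩
  let Ψ : A → A := Φ ∘ π
  have hΨ : ∀ x, HasFDerivAt Ψ ((fderiv ℝ Φ (π x)).comp π) x := fun x =>
    (hΦ.differentiable one_ne_zero (π x)).hasFDerivAt.comp x π.hasFDerivAt
  have hnull : μ (Ψ '' {x | ((fderiv ℝ Φ (π x)).comp π).det = 0}) = 0 :=
    addHaar_image_eq_zero_of_det_fderivWithin_eq_zero μ
      (fun x _ => (hΨ x).hasFDerivWithinAt) fun x hx => hx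
  have hae := measure_eq_zero_iff_ae_notMem.1 hnull
  filter_upwards [hae] with a ha
  have hdet : ∀ x, Φ (π x) = a → ((fderiv ℝ Φ (π x)).comp π).det ≠ 0 := fun x hx h0 =>
    ha ⟨x, h0, hx⟩
  have hker : ∀ x, Φ (π x) = a → Function.Injective ((fderiv ℝ Φ (π x)).comp π) := by
    intro x hx
    have := (LinearMap.isUnit_iff_isUnit_det
      ((fderiv ℝ Φ (π x)).comp π : A →ₗ[ℝ] A)).2 (isUnit_iff_ne_zero.2 (hdet x hx))
    exact ((Module.End.isUnit_iff _).1 this).1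
  constructor
  · intro K hK
    by_contra hinf
    obtain ⟨m, hm, hacc⟩ := Set.Infinite.exists_accPt_of_subset_isCompact hinf hK
      Set.inter_subset_left
    have hcl : IsClosed (Φ ⁻¹' {a}) := isClosed_singleton.preimage hΦ.continuous
    have hma : Φ m = a := hcl.closure_subset_iff.2 Set.inter_subset_right
      (accPt_iff_clusterPt.1 hacc |>.mono inf_le_right |>.mem_closure)
    obtain ⟨x, rfl⟩ := hπ m
    have hinj : Function.Injective (fderiv ℝ Φ (π x)) := by
      have hπinj : Function.Injective π := fun y z hyz =>
        hker x hma (by simp [hyz])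
      intro v w hvw
      obtain ⟨v, rfl⟩ := hπ v
      obtain ⟨w, rfl⟩ := hπ w
      rw [hker x hma hvw]
    obtain ⟨C, -, hC⟩ := (fderiv ℝ Φ (π x) : M →ₗ[ℝ] A).exists_antilipschitzWith
      (LinearMap.ker_eq_bot.2 hinj)
    have hne := (hΦ.differentiable one_ne_zero (π x)).hasFDerivAt.eventually_ne ⟨C, hC⟩ (c := a)
    rw [accPt_iff_frequently_nhdsNE] at hacc
    obtain ⟨z, hz, hz'⟩ := (hacc.and_eventually hne).exists
    exact hz' hz.2
  · rintro hlt m rfl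
    obtain ⟨x, rfl⟩ := hπ m
    have hπinj : Function.Injective π := fun y z hyz => hker x rfl (by simp [hyz])
    exact absurd (LinearMap.finrank_le_finrank_of_injective (f := (π : A →ₗ[ℝ] M)) hπinj)
      (not_le.2 hlt)

end Sard

section Genericity

open MeasureTheory

variable {N d : ℕ}

/-- Extension by zero of a function defined on a finite set. -/
def extendByZero {V E : Type*} [DecidableEq V] [Zero E] (s : Finset V) (f : s → E) (v : V) : E :=
  if h : v ∈ s then f ⟨v, h⟩ else 0

theorem contDiff_extendByZero {V E : Type*} [Fintype V] [DecidableEq V] [NormedAddCommGroup E]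
    [NormedSpace ℝ E] (s : Finset V) :
    ContDiff ℝ 1 (extendByZero s : (s → E) → V → E) := by
  refine contDiff_pi.2 fun v => ?_
  unfold extendByZero
  by_cases h : v ∈ s
  · simpa only [h, dif_pos] using contDiff_apply ℝ E (⟨v, h⟩ : s)
  · simpa only [h, dif_neg, not_false_eq_true] using contDiff_const

/-- The point of the affine hull of `σ_S` whose barycentric coordinates at the vertices of `S` other
than `r` are given by `u`. -/
def affinePoint (S : Finset (Fin (N+1))) (r : Fin (N+1)) (u : Fin (N+1) → ℝ) (v : Fin (N+1)) : ℝ :=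
  if v ∈ S then (if v = r then 1 - ∑ w ∈ S.erase r, u w else u v) else 0

theorem affinePoint_eq {S : Finset (Fin (N+1))} {r : Fin (N+1)} {u x : Fin (N+1) → ℝ}
    (hx : x ∈ simpFace S) (hr : r ∈ S) (hu : ∀ v ∈ S.erase r, u v = x v) :
    affinePoint S r u = x := by
  funext v
  unfold affinePoint
  split_ifs with hv hvr
  · subst hvr
    rw [Finset.sum_congr rfl hu, ← sum_eq_one_of_mem_simpFace hx, ← Finset.add_sum_erase S x hr]
    ring
  · exact hu v (Finset.mem_erase.2 ⟨hvr, hv⟩)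
  · exact (hx.2 v hv).symm

theorem contDiff_affinePoint (S : Finset (Fin (N+1))) (r : Fin (N+1)) :
    ContDiff ℝ 1 (affinePoint S r) := by
  refine contDiff_pi.2 fun v => ?_
  unfold affinePoint
  split_ifs <;> fun_prop

/-- The perturbations of the vertices parametrized by the coincidences on a family `B` of faces:
given perturbations `m.1`, coordinates `m.2.1` of points of the faces and a target point `m.2.2`,
correct the perturbations on each face so that its point is mapped to the target. -/
def coincidenceMap (g : (Fin (N+1) → ℝ) → Euc d) (B : Finset (Finset (Fin (N+1))))
    (r : Finset (Fin (N+1)) → Fin (N+1))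
    (m : (Fin (N+1) → Euc d) × (Fin (N+1) → ℝ) × Euc d) (v : Fin (N+1)) : Euc d :=
  m.1 v + ∑ S ∈ B, if v ∈ S then m.2.2 - g (affinePoint S (r S) m.2.1) -
    ∑ w, affinePoint S (r S) m.2.1 w • m.1 w else 0

theorem contDiff_coincidenceMap {g : (Fin (N+1) → ℝ) → Euc d} (hg : ContDiff ℝ 1 g)
    (B : Finset (Finset (Fin (N+1)))) (r : Finset (Fin (N+1)) → Fin (N+1)) :
    ContDiff ℝ 1 (coincidenceMap g B r) := by
  refine contDiff_pi.2 fun v => ?_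
  unfold coincidenceMap
  refine ContDiff.add (by fun_prop) (ContDiff.sum fun S _ => ?_)
  have hA : ContDiff ℝ 1 fun m : (Fin (N+1) → Euc d) × (Fin (N+1) → ℝ) × Euc d =>
      affinePoint S (r S) m.2.1 := (contDiff_affinePoint S (r S)).comp (by fun_prop)
  split_ifs
  · refine ContDiff.sub (ContDiff.sub (by fun_prop) (hg.comp hA)) (ContDiff.sum fun w _ => ?_)
    exact (contDiff_pi.1 hA w).smul (by fun_prop)
  · exact contDiff_const

theorem coincidenceMap_eq {g : (Fin (N+1) → ℝ) → Euc d} {B : Finset (Finset (Fin (N+1)))}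
    {r : Finset (Fin (N+1)) → Fin (N+1)} (hr : ∀ S ∈ B, r S ∈ S)
    (hdisj : ∀ S ∈ B, ∀ T ∈ B, S ≠ T → Disjoint S T) {a : Fin (N+1) → Euc d}
    {x : Finset (Fin (N+1)) → Fin (N+1) → ℝ} {p : Euc d} (hx : ∀ S ∈ B, x S ∈ simpFace S)
    (hp : ∀ S ∈ B, g (x S) + ∑ v, x S v • a v = p) {u : Fin (N+1) → ℝ}
    (hu : ∀ S ∈ B, ∀ v ∈ S.erase (r S), u v = x S v) :
    coincidenceMap g B r (fun v => a v - ∑ S ∈ B, if v ∈ S then a (r S) else 0, u, p) = a := by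
  funext v
  unfold coincidenceMap
  dsimp only
  rw [sub_add, sub_eq_self, sub_eq_zero]
  refine Finset.sum_congr rfl fun S hS => ?_
  split_ifs with hv
  · rw [affinePoint_eq (hx S hS) (hr S hS) (hu S hS)]
    have h1 : ∀ w, x S w • (a w - ∑ T ∈ B, if w ∈ T then a (r T) else 0) =
        x S w • a w - x S w • a (r S) := by
      intro w
      by_cases hw : w ∈ S
      · rw [Finset.sum_eq_single_of_mem S hS, if_pos hw, smul_sub]
        intro T hT hTS
        exact if_neg fun hwT => Finset.disjoint_left.1 (hdisj T hT S hS hTS) hwT hw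
      · simp [(hx S hS).2 w hw]
    simp only [h1, Finset.sum_sub_distrib, ← Finset.sum_smul, (hx S hS).1.2, one_smul, ← hp S hS]
    abel
  · rfl

/-- For almost all perturbations of the vertices, the images of pairwise disjoint faces meet in the
expected dimension, if this dimension is at most zero. -/
theorem ae_finite_iInter_image_simpFace {g : (Fin (N+1) → ℝ) → Euc d} (hg : ContDiff ℝ 1 g)
    {B : Finset (Finset (Fin (N+1)))} (hB : B.Nonempty) (hne : ∀ S ∈ B, S.Nonempty)
    (hdisj : ∀ S ∈ B, ∀ T ∈ B, S ≠ T → Disjoint S T)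
    (hcard : ∑ S ∈ B, S.card + d ≤ (d + 1) * B.card) :
    ∀ᵐ a : Fin (N+1) → Euc d,
      (⋂ S ∈ B, (fun x => g x + ∑ v, x v • a v) '' simpFace S).Finite ∧
      (∑ S ∈ B, S.card + d < (d + 1) * B.card →
        (⋂ S ∈ B, (fun x => g x + ∑ v, x v • a v) '' simpFace S) = ∅) := by
  have hrep : ∃ r : Finset (Fin (N+1)) → Fin (N+1), ∀ S ∈ B, r S ∈ S := by
    choose! r hr using hne
    exact ⟨r, hr⟩
  obtain ⟨r, hr⟩ := hrep
  have hinj : Set.InjOn r B := by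
    intro S hS T hT hST
    by_contra h
    exact Finset.disjoint_left.1 (hdisj S hS T hT h) (hr S hS) (hST ▸ hr T hT)
  let R : Finset (Fin (N+1)) := B.image r
  let I : Finset (Fin (N+1)) := B.biUnion id \ R
  have hRsub : R ⊆ B.biUnion id := by
    intro v hv
    obtain ⟨S, hS, rfl⟩ := Finset.mem_image.1 hv
    exact Finset.mem_biUnion.2 ⟨S, hS, hr S hS⟩
  have hRcard : R.card = B.card := Finset.card_image_of_injOn hinj
  have hUcard : (B.biUnion id).card = ∑ S ∈ B, S.card :=
    Finset.card_biUnion fun S hS T hT h => hdisj S hS T hT h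
  have hIcard : I.card + B.card = ∑ S ∈ B, S.card := by
    rw [← hRcard, ← hUcard]
    exact Finset.card_sdiff_add_card_eq_card hRsub
  have hRc : Rᶜ.card + B.card = N + 1 := by
    rw [← hRcard, Finset.card_compl_add_card, Fintype.card_fin]
  let L : (↥(Rᶜ) → Euc d) × (I → ℝ) × Euc d → (Fin (N+1) → Euc d) × (Fin (N+1) → ℝ) × Euc d :=
    fun m => (extendByZero Rᶜ m.1, extendByZero I m.2.1, m.2.2)
  have hL : ContDiff ℝ 1 L := ((contDiff_extendByZero _).comp contDiff_fst).prodMk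
    (((contDiff_extendByZero _).comp (contDiff_fst.comp contDiff_snd)).prodMk (by fun_prop))
  have hM : Module.finrank ℝ ((↥(Rᶜ) → Euc d) × (I → ℝ) × Euc d) =
      Rᶜ.card * d + (I.card + d) := by
    simp [Module.finrank_pi_fintype]
  have hA : Module.finrank ℝ (Fin (N+1) → Euc d) = (N + 1) * d := by
    simp [Module.finrank_pi_fintype]
  have hdim : Module.finrank ℝ ((↥(Rᶜ) → Euc d) × (I → ℝ) × Euc d) ≤
      Module.finrank ℝ (Fin (N+1) → Euc d) := by
    rw [hM, hA]
    nlinarith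
  filter_upwards [ae_finite_fiber volume ((contDiff_coincidenceMap hg B r).comp hL) hdim] with a ha
  set g' : (Fin (N+1) → ℝ) → Euc d := fun x => g x + ∑ v, x v • a v
  have hg'c : Continuous g' := by
    have := hg.continuous
    fun_prop
  let α : ↥(Rᶜ) → Euc d := fun v => a v - ∑ S ∈ B, if (v : Fin (N+1)) ∈ S then a (r S) else 0
  have hα : extendByZero Rᶜ α = fun v => a v - ∑ S ∈ B, if v ∈ S then a (r S) else 0 := by
    funext v
    unfold extendByZero
    split_ifs with hv
    · rfl
    · rw [Finset.mem_compl, not_not] at hv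
      obtain ⟨S, hS, rfl⟩ := Finset.mem_image.1 hv
      rw [Finset.sum_eq_single_of_mem S hS, if_pos (hr S hS), sub_self]
      intro T hT hTS
      exact if_neg fun h => Finset.disjoint_left.1 (hdisj T hT S hS hTS) h (hr S hS)
  have hsol : ∀ p ∈ ⋂ S ∈ B, g' '' simpFace S, ∃ m : (↥(Rᶜ) → Euc d) × (I → ℝ) × Euc d,
      m ∈ ({α} : Set (↥(Rᶜ) → Euc d)) ×ˢ (Set.Icc (0 : I → ℝ) 1) ×ˢ (g' '' stdSimp N) ∧
      (coincidenceMap g B r ∘ L) m = a ∧ m.2.2 = p := by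
    intro p hp
    simp only [Set.mem_iInter] at hp
    choose! x hx hxp using hp
    have hsum : ∀ S ∈ B, ∀ v ∈ S, ∑ T ∈ B, x T v = x S v := fun S hS v hv =>
      Finset.sum_eq_single_of_mem S hS fun T hT hTS =>
        (hx T hT).2 v fun h => Finset.disjoint_left.1 (hdisj T hT S hS hTS) h hv
    refine ⟨(α, fun v => ∑ S ∈ B, x S v, p), ⟨rfl, ?_, ?_⟩, ?_, rfl⟩
    · refine ⟨fun v => Finset.sum_nonneg fun S hS => (hx S hS).1.1 _, fun v => ?_⟩
      obtain ⟨S, hS, hv⟩ := Finset.mem_biUnion.1 (Finset.mem_sdiff.1 v.2).1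
      change ∑ T ∈ B, x T v ≤ 1
      rw [hsum S hS v hv]
      exact le_one_of_mem_stdSimp (hx S hS).1 _
    · obtain ⟨S, hS⟩ := hB
      exact ⟨x S, (hx S hS).1, hxp S hS⟩
    · change coincidenceMap g B r (extendByZero Rᶜ α, _, p) = a
      rw [hα]
      refine coincidenceMap_eq hr hdisj hx hxp fun S hS v hv => ?_
      obtain ⟨hvr, hvS⟩ := Finset.mem_erase.1 hv
      have hvI : v ∈ I := by
        refine Finset.mem_sdiff.2 ⟨Finset.mem_biUnion.2 ⟨S, hS, hvS⟩, fun h => ?_⟩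
        obtain ⟨T, hT, rfl⟩ := Finset.mem_image.1 h
        rcases eq_or_ne T S with rfl | hTS
        · exact hvr rfl
        · exact Finset.disjoint_left.1 (hdisj T hT S hS hTS) (hr T hT) hvS
      simpa [extendByZero, hvI] using hsum S hS v hvS
  constructor
  · have hK : IsCompact (({α} : Set (↥(Rᶜ) → Euc d)) ×ˢ (Set.Icc (0 : I → ℝ) 1) ×ˢ
        (g' '' stdSimp N)) :=
      isCompact_singleton.prod (isCompact_Icc.prod (isCompact_stdSimp.image hg'c))
    refine ((ha.1 _ hK).image fun m => m.2.2).subset fun p hp => ?_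
    obtain ⟨m, hm, hma, hmp⟩ := hsol p hp
    exact ⟨m, ⟨hm, hma⟩, hmp⟩
  · intro hlt
    refine Set.eq_empty_iff_forall_notMem.2 fun p hp => ?_
    obtain ⟨m, -, hma, -⟩ := hsol p hp
    refine ha.2 ?_ m hma
    rw [hM, hA]
    nlinarith

/-- A continuous map has arbitrarily close approximations for which images of pairwise disjoint faces
meet in the expected dimension, if this dimension is at most zero. -/
theorem exists_generic_approx {f : (Fin (N+1) → ℝ) → Euc d} (hf : Continuous f) {ε : ℝ}
    (hε : 0 < ε) :
    ∃ g : (Fin (N+1) → ℝ) → Euc d, Continuous g ∧ (∀ x ∈ stdSimp N, dist (g x) (f x) ≤ ε) ∧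
      ∀ B : Finset (Finset (Fin (N+1))), B.Nonempty → (∀ S ∈ B, S.Nonempty) →
        (∀ S ∈ B, ∀ T ∈ B, S ≠ T → Disjoint S T) → ∑ S ∈ B, S.card + d ≤ (d + 1) * B.card →
        (⋂ S ∈ B, g '' simpFace S).Finite ∧
        (∑ S ∈ B, S.card + d < (d + 1) * B.card → (⋂ S ∈ B, g '' simpFace S) = ∅) := by
  obtain ⟨g, hg, hgf, -⟩ := hf.exists_contDiff_approx 1 (ε := fun _ => ε / 2) continuous_const
    fun _ => half_pos hε
  have hae : ∀ᵐ a : Fin (N+1) → Euc d, ∀ B : Finset (Finset (Fin (N+1))), B.Nonempty →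
      (∀ S ∈ B, S.Nonempty) → (∀ S ∈ B, ∀ T ∈ B, S ≠ T → Disjoint S T) →
      ∑ S ∈ B, S.card + d ≤ (d + 1) * B.card →
      (⋂ S ∈ B, (fun x => g x + ∑ v, x v • a v) '' simpFace S).Finite ∧
      (∑ S ∈ B, S.card + d < (d + 1) * B.card →
        (⋂ S ∈ B, (fun x => g x + ∑ v, x v • a v) '' simpFace S) = ∅) := by
    refine ae_all_iff.2 fun B => ?_
    by_cases h : B.Nonempty ∧ (∀ S ∈ B, S.Nonempty) ∧
      (∀ S ∈ B, ∀ T ∈ B, S ≠ T → Disjoint S T) ∧ ∑ S ∈ B, S.card + d ≤ (d + 1) * B.card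
    · filter_upwards [ae_finite_iInter_image_simpFace (mod_cast hg) h.1 h.2.1 h.2.2.1 h.2.2.2]
        with a ha _ _ _ _ using ha
    · exact Filter.Eventually.of_forall fun a h1 h2 h3 h4 => absurd ⟨h1, h2, h3, h4⟩ h
  obtain ⟨a, ha, hae⟩ := (Measure.dense_of_ae hae).exists_dist_lt 0 (half_pos hε)
  rw [dist_zero_left] at hae
  have hgc := hg.continuous
  refine ⟨fun x => g x + ∑ v, x v • a v, by fun_prop, fun x hx => ?_, ha⟩
  have hsum : ‖∑ v, x v • a v‖ ≤ ε / 2 := by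
    calc ‖∑ v, x v • a v‖ ≤ ∑ v, ‖x v • a v‖ := norm_sum_le _ _
      _ ≤ ∑ v, x v * (ε / 2) := by
        refine Finset.sum_le_sum fun v _ => ?_
        rw [norm_smul, Real.norm_of_nonneg (hx.1 v)]
        exact mul_le_mul_of_nonneg_left ((norm_le_pi_norm a v).trans hae.le) (hx.1 v)
      _ = ε / 2 := by rw [← Finset.sum_mul, hx.2, one_mul]
  calc dist (g x + ∑ v, x v • a v) (f x)
      ≤ dist (g x + ∑ v, x v • a v) (g x) + dist (g x) (f x) := dist_triangle _ _ _
    _ ≤ ε / 2 + ε / 2 := by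
      refine add_le_add ?_ (hgf x).le
      simpa [dist_eq_norm] using hsum
    _ = ε := add_halves ε

end Genericity

section Construction

variable {N d : ℕ}

theorem exists_mem_eq_zero_of_ncard_le {x : Fin (N+1) → ℝ} {T : Finset (Fin (N+1))}
    (hx : {i | x i ≠ 0}.ncard ≤ d) (hT : T.card = d + 1) : ∃ i ∈ T, x i = 0 := by
  by_contra! h
  have := Set.ncard_le_ncard (s := (T : Set (Fin (N+1)))) (t := {i | x i ≠ 0}) (fun i hi => h i hi)
  rw [Set.ncard_coe_finset] at this
  omega

theorem exists_continuous_injOn {E : Type*} [NormedAddCommGroup E] {Q : Set E} (hQ : Q.Finite) :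
    ∃ l : E → ℝ, Continuous l ∧ (∀ p, 0 < l p) ∧ (∀ p, l p ≤ 1 / 2) ∧ Set.InjOn l Q := by
  obtain ⟨n, hn⟩ := Set.countable_iff_exists_injOn.1 hQ.countable
  obtain ⟨h, hh, hhn⟩ := exists_continuous_extension hQ.isClosed (u := fun p => (n p : ℝ))
    (hQ.continuousOn _)
  have hpos : ∀ p, 0 < 2 + |h p| := fun p => by positivity
  refine ⟨fun p => (2 + |h p|)⁻¹, Continuous.inv₀ (by fun_prop) fun p => (hpos p).ne',
    fun p => inv_pos.2 (hpos p), fun p => ?_, fun p hp p' hp' h => hn hp hp' ?_⟩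
  · rw [one_div]
    exact inv_anti₀ two_pos (by linarith [abs_nonneg (h p)])
  · simpa [hhn p hp, hhn p' hp'] using h

theorem exists_continuous_indicator {Q : Set ℝ} (hQ : Q.Finite) (s : ℝ) :
    ∃ θ : ℝ → ℝ, Continuous θ ∧ (∀ t, |θ t| ≤ 1) ∧ ∀ t ∈ Q, θ t = if t = s then 1 else 0 := by
  obtain ⟨θ, hθ, hθQ, hθ1⟩ := exists_continuous_extension_norm_le hQ.isClosed
    (u := fun t => if t = s then (1 : ℝ) else 0) (hQ.continuousOn _) one_pos
    fun t _ => by split_ifs <;> simp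
  exact ⟨θ, hθ, hθ1, hθQ⟩

/-- If `p ∉ W_{≠0}(g|_{∂σ_T})`, then `g` can be modified off the boundary of `σ_T` so as to avoid
`p` on `σ_T`. -/
theorem exists_correction {g : (Fin (N+1) → ℝ) → Euc d} (hg : Continuous g)
    {T : Finset (Fin (N+1))} (hT : T.Nonempty) (p : Euc d) :
    ∃ D : (Fin (N+1) → ℝ) → Euc d, Continuous D ∧ (∀ x, (∃ i ∈ T, x i = 0) → D x = 0) ∧
      (¬ InWne d g T p → ∀ x ∈ simpFace T, g x + D x ≠ p) := by
  by_cases h : InWne d g T p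
  · exact ⟨fun _ => 0, continuous_const, fun _ _ => rfl, fun h' => absurd h h'⟩
  · obtain ⟨G, hG, hGg, hGp⟩ := exists_extension_of_not_inWne hT h
    obtain ⟨D, hD, hDT, hD0⟩ := exists_continuous_extension_union (isClosed_simpFace T)
      (isClosed_exists_mem_eq_zero T) (u := fun x => G x - g x) (v := fun _ => 0)
      (by fun_prop) continuousOn_const fun x hx hx0 => by simp [hGg x ⟨hx, hx0⟩]
    refine ⟨D, hD, hD0, fun _ x hx => ?_⟩
    rw [hDT x hx, add_sub_cancel]
    exact hGp x hx

/-- The horizontal component of the lifted map. Here `Metric.infDist x _` is the distance to the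
points with at most `d` nonzero coordinates. -/
theorem exists_lift {g : (Fin (N+1) → ℝ) → Euc d} (hg : Continuous g) {Q : Set (Euc d)}
    (hQ : Q.Finite) :
    ∃ (Γ : (Fin (N+1) → ℝ) × ℝ → Euc d) (l : Euc d → ℝ), Continuous Γ ∧ Continuous l ∧
      (∀ p, 0 < l p) ∧ (∀ p, l p ≤ 1 / 2) ∧
      (∀ x, {i | x i ≠ 0}.ncard ≤ d → Γ (x, 0) = g x) ∧
      ∀ p ∈ Q, ∀ T : Finset (Fin (N+1)), T.card = d + 1 → ¬ InWne d g T p →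
        ∀ x, (∀ i, 0 ≤ x i) → (∀ i ∉ T, x i = 0) → ∀ s ≤ 1 / 2, ∑ i, x i = 1 - s →
        s = Metric.infDist x {x | {i | x i ≠ 0}.ncard ≤ d} * l p →
        Metric.infDist x {x | {i | x i ≠ 0}.ncard ≤ d} ≠ 0 → Γ (x, s) ≠ p := by
  obtain ⟨l, hl, hlpos, hlle, hlinj⟩ := exists_continuous_injOn hQ
  choose θ hθ hθ1 hθQ using fun p => exists_continuous_indicator (hQ.image l) (l p)
  choose! D hD hD0 hDp using fun (T : Finset (Fin (N+1))) (hT : T.Nonempty) (p : Euc d) =>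
    exists_correction hg hT p
  let Z : Set (Fin (N+1) → ℝ) := {x | {i | x i ≠ 0}.ncard ≤ d}
  have hZ : IsClosed Z := isClosed_ncard_ne_zero_le d
  have hZne : Z.Nonempty := ⟨0, by simp [Z]⟩
  let ρ : (Fin (N+1) → ℝ) × ℝ → (Fin (N+1) → ℝ) := fun m => (max (1 - m.2) (1 / 2))⁻¹ • m.1
  have hρ : Continuous ρ := by
    refine Continuous.smul (Continuous.inv₀ (f := fun m : (Fin (N+1) → ℝ) × ℝ =>
      max (1 - m.2) (1 / 2)) (by fun_prop) fun m => ?_) continuous_fst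
    exact (lt_max_of_lt_right (by norm_num)).ne'
  have hpow : ∀ T ∈ Finset.powersetCard (d + 1) (Finset.univ : Finset (Fin (N+1))),
      T.card = d + 1 ∧ T.Nonempty := fun T hT => by
    have := (Finset.mem_powersetCard.1 hT).2
    exact ⟨this, Finset.card_pos.1 (by omega)⟩
  have hD0' : ∀ T : Finset (Fin (N+1)), T.Nonempty → ∀ p m, (∃ i ∈ T, m.1 i = 0) →
      D T p (ρ m) = 0 := by
    rintro T hT p m ⟨i, hi, h⟩
    exact hD0 T hT p _ ⟨i, hi, by simp [ρ, h]⟩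
  refine ⟨fun m => g (ρ m) + ∑ T ∈ Finset.powersetCard (d + 1) Finset.univ, ∑ p ∈ hQ.toFinset,
    θ p (m.2 / Metric.infDist m.1 Z) • D T p (ρ m), l, ?_, hl, hlpos, hlle, ?_, ?_⟩
  · refine (hg.comp hρ).add (continuous_finsetSum _ fun T hT => continuous_finsetSum _ fun p _ => ?_)
    obtain ⟨hTc, hT⟩ := hpow T hT
    refine continuous_smul_of_bounded ((hD T hT p).comp hρ) (fun m => hθ1 p _) fun m hm => ?_
    refine ContinuousAt.comp (hθ p).continuousAt (ContinuousAt.div (by fun_prop)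
      ((Metric.continuous_infDist_pt Z).comp continuous_fst).continuousAt fun h => hm ?_)
    exact hD0' T hT p m (exists_mem_eq_zero_of_ncard_le
      ((hZ.mem_iff_infDist_zero hZne).2 h) hTc)
  · intro x hx
    have hρx : ρ (x, 0) = x := by
      have : max (1 - 0 : ℝ) (1 / 2) = 1 := by norm_num
      simp only [ρ, this, inv_one, one_smul]
    dsimp only
    rw [Finset.sum_eq_zero, add_zero, hρx]
    intro T hT
    obtain ⟨hTc, hT⟩ := hpow T hT
    refine Finset.sum_eq_zero fun p _ => ?_
    rw [hD0' T hT p _ (exists_mem_eq_zero_of_ncard_le hx hTc), smul_zero]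
  · intro p hp T hT hW x hx0 hxT s hs hsum hsl hδ
    change s = Metric.infDist x Z * l p at hsl
    change Metric.infDist x Z ≠ 0 at hδ
    have hTne : T.Nonempty := Finset.card_pos.1 (by omega)
    have hρx : ρ (x, s) ∈ simpFace T := by
      have hmax : max (1 - s) (1 / 2) = 1 - s := max_eq_left (by linarith)
      have hpos : 0 < 1 - s := by linarith
      refine ⟨⟨fun i => ?_, ?_⟩, fun i hi => ?_⟩
      · simp only [ρ, hmax, Pi.smul_apply, smul_eq_mul]
        exact mul_nonneg (inv_nonneg.2 hpos.le) (hx0 i)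
      · simp only [ρ, hmax, Pi.smul_apply, smul_eq_mul, ← Finset.mul_sum, hsum]
        exact inv_mul_cancel₀ hpos.ne'
      · simp [ρ, hxT i hi]
    have hquot : s / Metric.infDist x Z = l p := by rw [hsl, mul_div_cancel_left₀ _ hδ]
    dsimp only
    rw [Finset.sum_eq_single_of_mem T (Finset.mem_powersetCard.2 ⟨Finset.subset_univ T, hT⟩),
      Finset.sum_eq_single_of_mem p (hQ.mem_toFinset.2 hp)]
    · rw [hquot, hθQ p _ (Set.mem_image_of_mem l hp), if_pos rfl, one_smul]
      exact hDp T hTne p hW _ hρx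
    · intro p' hp' hne
      rw [hquot, hθQ p' _ (Set.mem_image_of_mem l hp), if_neg, zero_smul]
      exact fun h => hne (hlinj hp (hQ.mem_toFinset.1 hp') h).symm
    · intro T' hT' hne
      obtain ⟨hTc, hT'⟩ := hpow T' hT'
      obtain ⟨i, hi, hiT⟩ := Finset.not_subset.1 fun h =>
        hne (Finset.eq_of_subset_of_card_le h (by omega))
      exact Finset.sum_eq_zero fun p' _ => by
        rw [hD0' T' hT' p' _ ⟨i, hi, hxT i hiT⟩, smul_zero]

end Construction

section Lifting

variable {d q : ℕ}

theorem sum_card_le_of_disjoint {V ι : Type*} [DecidableEq V] {P : Finset ι}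
    {T : ι → Finset V} (hT : ∀ i ∈ P, ∀ j ∈ P, i ≠ j → Disjoint (T i) (T j)) {U : Finset V}
    (hU : ∀ i ∈ P, T i ⊆ U) : ∑ i ∈ P, (T i).card ≤ U.card := by
  rw [← Finset.card_biUnion hT]
  exact Finset.card_le_card (Finset.biUnion_subset.2 hU)

/-- Given a generic map without winding partitions, a map from a larger simplex to the space of one
dimension more which has no Tverberg partition. -/
theorem exists_forall_not_isTverbergPartition {N M : ℕ} (hd : 1 ≤ d)
    (hq : 1 ≤ q) (hN : N = (d + 1) * (q - 1)) (hM : M = (d + 1 + 1) * (q - 1))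
    {g : (Fin (N+1) → ℝ) → Euc d} (hg : Continuous g)
    (hgen : ∀ B : Finset (Finset (Fin (N+1))), B.Nonempty → (∀ S ∈ B, S.Nonempty) →
      (∀ S ∈ B, ∀ T ∈ B, S ≠ T → Disjoint S T) → ∑ S ∈ B, S.card + d ≤ (d + 1) * B.card →
      (⋂ S ∈ B, g '' simpFace S).Finite ∧
      (∑ S ∈ B, S.card + d < (d + 1) * B.card → (⋂ S ∈ B, g '' simpFace S) = ∅))
    (hw : ∀ P, ¬ IsWindingPartition d q g P) :
    ∃ F : (Fin (M+1) → ℝ) → Euc (d + 1), Continuous F ∧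
      ∀ P, ¬ IsTverbergPartition q F P := by
  obtain ⟨k, rfl⟩ : ∃ k, q = k + 1 := ⟨q - 1, by omega⟩
  rw [Nat.add_sub_cancel] at hN hM
  have hMN : M = N + k := by rw [hM, hN]; ring
  let valid : Finset (Finset (Fin (N+1))) → Prop := fun B => B.Nonempty ∧
    (∀ S ∈ B, S.Nonempty) ∧ (∀ S ∈ B, ∀ T ∈ B, S ≠ T → Disjoint S T) ∧
    ∑ S ∈ B, S.card + d ≤ (d + 1) * B.card
  let Q : Set (Euc d) := ⋃ (B) (_ : valid B), ⋂ S ∈ B, g '' simpFace S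
  have hQ : Q.Finite := Set.finite_iUnion fun B => Set.finite_iUnion fun hB =>
    (hgen B hB.1 hB.2.1 hB.2.2.1 hB.2.2.2).1
  obtain ⟨Γ, l, hΓ, hl, hlpos, hlle, hΓ0, hΓW⟩ := exists_lift hg hQ
  set Z : Set (Fin (N+1) → ℝ) := {x | {i | x i ≠ 0}.ncard ≤ d}
  have hZ : IsClosed Z := isClosed_ncard_ne_zero_le d
  have hZ0 : (0 : Fin (N+1) → ℝ) ∈ Z := by simp [Z]
  let ι : Fin (N+1) ↪ Fin (M+1) := Fin.castLEEmb (by omega)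
  let W : Finset (Fin (M+1)) := (Finset.univ.map ι)ᶜ
  have hWcard : W.card = k := by
    rw [Finset.card_compl, Finset.card_map, Finset.card_univ, Fintype.card_fin, Fintype.card_fin]
    omega
  let e : (Euc d × ℝ) ≃L[ℝ] Euc (d + 1) := ContinuousLinearEquiv.ofFinrankEq (by simp)
  let σ : (Fin (M+1) → ℝ) → ℝ := fun z => ∑ v ∈ W, z v
  have hσ : Continuous σ := by fun_prop
  let Γ' : (Fin (M+1) → ℝ) → Euc d := fun z => Γ (z ∘ ι, σ z)
  have hΓ' : Continuous Γ' := by fun_prop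
  refine ⟨fun z => e (Γ' z, σ z - Metric.infDist (z ∘ ι) Z * l (Γ' z)), ?_, ?_⟩
  · have := Metric.continuous_infDist_pt Z
    fun_prop
  rintro P ⟨hPcard, -, hPdisj, y, hy⟩
  obtain ⟨⟨p, t⟩, rfl⟩ := e.surjective y
  simp only [Set.mem_iInter] at hy
  choose! z hz hzy using hy
  have hzp : ∀ S ∈ P, Γ' (z S) = p := fun S hS =>
    congrArg Prod.fst (e.injective (hzy S hS))
  have hzt : ∀ S ∈ P, σ (z S) - Metric.infDist (z S ∘ ι) Z * l p = t := fun S hS => by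
    have := congrArg Prod.snd (e.injective (hzy S hS))
    simpa only [hzp S hS] using this
  have hσ0 : ∀ S ∈ P, 0 ≤ σ (z S) := fun S hS => Finset.sum_nonneg fun v _ => (hz S hS).1.1 v
  have hsum : ∀ S ∈ P, ∑ i, z S (ι i) = 1 - σ (z S) := by
    intro S hS
    rw [eq_sub_iff_add_eq, ← (hz S hS).1.2, ← Finset.sum_map Finset.univ ι (z S)]
    exact Finset.sum_add_sum_compl _ _
  let T : Finset (Fin (M+1)) → Finset (Fin (N+1)) := fun S =>
    Finset.univ.filter fun i => z S (ι i) ≠ 0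
  have hTmem : ∀ S i, i ∈ T S ↔ z S (ι i) ≠ 0 := fun S i => by simp [T]
  have hTZ : ∀ S, z S ∘ ι ∈ Z ↔ (T S).card ≤ d := by
    intro S
    have : {i | (z S ∘ ι) i ≠ 0} = (T S : Set (Fin (N+1))) := by ext i; simp [T]
    change {i | (z S ∘ ι) i ≠ 0}.ncard ≤ d ↔ _
    rw [this, Set.ncard_coe_finset]
  have hδ : ∀ S, (T S).card ≤ d ↔ Metric.infDist (z S ∘ ι) Z = 0 := fun S => by
    rw [← hTZ, hZ.mem_iff_infDist_zero ⟨0, hZ0⟩]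
  have hTsub : ∀ S ∈ P, ∀ i ∈ T S, ι i ∈ S := by
    intro S hS i hi
    by_contra h
    exact (hTmem S i).1 hi ((hz S hS).2 _ h)
  have hTdisj : ∀ S ∈ P, ∀ S' ∈ P, S ≠ S' → Disjoint (T S) (T S') := fun S hS S' hS' hne =>
    Finset.disjoint_left.2 fun i hi hi' => Finset.disjoint_left.1 (hPdisj S hS S' hS' hne)
      (hTsub S hS i hi) (hTsub S' hS' i hi')
  have hTsum : ∑ S ∈ P, (T S).card ≤ N + 1 := by
    simpa using sum_card_le_of_disjoint hTdisj fun S _ => Finset.subset_univ (T S)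
  have hlow : ∃ S ∈ P, (T S).card ≤ d := by
    by_contra! h
    have : P.card * (d + 1) ≤ ∑ S ∈ P, (T S).card := by
      simpa using Finset.sum_le_sum (f := fun _ => d + 1) (s := P) fun S hS => h S hS
    rw [hPcard] at this
    nlinarith
  have hold : ∃ S ∈ P, S ∩ W = ∅ := by
    by_contra! h
    have h1 : P.card ≤ ∑ S ∈ P, (S ∩ W).card := by
      simpa using Finset.sum_le_sum (f := fun _ => 1) (g := fun S => (S ∩ W).card) (s := P) fun S hS =>
        Finset.card_pos.2 (h S hS)
    have h2 : ∑ S ∈ P, (S ∩ W).card ≤ W.card := sum_card_le_of_disjoint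
      (fun S hS S' hS' hne => (hPdisj S hS S' hS' hne).mono Finset.inter_subset_left
        Finset.inter_subset_left) fun S _ => Finset.inter_subset_right
    omega
  have ht : t = 0 := by
    refine le_antisymm ?_ ?_
    · obtain ⟨S, hS, hSW⟩ := hold
      have : σ (z S) = 0 := Finset.sum_eq_zero fun v hv => (hz S hS).2 v fun h =>
        Finset.notMem_empty v (hSW ▸ Finset.mem_inter.2 ⟨h, hv⟩)
      rw [← hzt S hS, this, zero_sub, neg_nonpos]
      exact mul_nonneg Metric.infDist_nonneg (hlpos p).le
    · obtain ⟨S, hS, hSd⟩ := hlow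
      rw [← hzt S hS, (hδ S).1 hSd, zero_mul, sub_zero]
      exact hσ0 S hS
  have hσδ : ∀ S ∈ P, σ (z S) = Metric.infDist (z S ∘ ι) Z * l p := fun S hS => by
    rw [← sub_eq_zero, hzt S hS, ht]
  have hσle : ∀ S ∈ P, σ (z S) ≤ 1 / 2 := by
    intro S hS
    have h1 : Metric.infDist (z S ∘ ι) Z ≤ 1 := by
      refine (Metric.infDist_le_dist_of_mem hZ0).trans ?_
      rw [dist_zero_right]
      refine (pi_norm_le_iff_of_nonneg zero_le_one).2 fun i => ?_
      rw [Function.comp_apply, Real.norm_of_nonneg ((hz S hS).1.1 _)]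
      exact le_one_of_mem_stdSimp (hz S hS).1 _
    rw [hσδ S hS]
    nlinarith [hlle p, hlpos p, Metric.infDist_nonneg (x := z S ∘ ι) (s := Z)]
  have hTne : ∀ S ∈ P, (T S).Nonempty := by
    intro S hS
    by_contra h
    rw [Finset.not_nonempty_iff_eq_empty] at h
    have : ∑ i, z S (ι i) = 0 := Finset.sum_eq_zero fun i _ => by
      by_contra h'
      exact Finset.notMem_empty i (h ▸ (hTmem S i).2 h')
    linarith [hsum S hS, hσle S hS]
  have hTinj : Set.InjOn T P := by
    intro S hS S' hS' h
    by_contra hne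
    obtain ⟨i, hi⟩ := hTne S hS
    exact Finset.disjoint_left.1 (hTdisj S hS S' hS' hne) hi (h ▸ hi)
  have himg : ∀ S ∈ P, (T S).card ≤ d → p ∈ g '' simpFace (T S) := by
    intro S hS hSd
    have hσS : σ (z S) = 0 := by rw [hσδ S hS, (hδ S).1 hSd, zero_mul]
    refine ⟨z S ∘ ι, ⟨⟨fun i => (hz S hS).1.1 _, ?_⟩, fun i hi => ?_⟩, ?_⟩
    · simpa [hσS] using hsum S hS
    · by_contra h
      exact hi ((hTmem S i).2 h)
    · rw [← hΓ0 _ ((hTZ S).2 hSd), ← hσS]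
      exact hzp S hS
  let PB := P.filter fun S => (T S).card ≤ d
  let PA := P.filter fun S => ¬ (T S).card ≤ d
  let B := PB.image T
  have hPBsub : ∀ S ∈ PB, S ∈ P := fun S hS => (Finset.mem_filter.1 hS).1
  have hcardAB : PB.card + PA.card = k + 1 := by
    rw [← hPcard]
    exact Finset.card_filter_add_card_filter_not _
  have hsumAB : ∑ S ∈ PB, (T S).card + ∑ S ∈ PA, (T S).card = ∑ S ∈ P, (T S).card :=
    Finset.sum_filter_add_sum_filter_not _ _ _
  have hBinj : Set.InjOn T PB := hTinj.mono fun S hS => hPBsub S hS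
  have hBcard : B.card = PB.card := Finset.card_image_of_injOn hBinj
  have hBsum : ∑ S ∈ B, S.card = ∑ S ∈ PB, (T S).card := Finset.sum_image hBinj
  have hA : PA.card * (d + 1) ≤ ∑ S ∈ PA, (T S).card := by
    simpa using Finset.sum_le_sum (f := fun _ => d + 1) (s := PA) fun S hS =>
      not_le.1 (Finset.mem_filter.1 hS).2
  have hdisj_image : ∀ P' ⊆ P, ∀ S ∈ P'.image T, ∀ S' ∈ P'.image T, S ≠ S' → Disjoint S S' := by
    intro P' hP' S hS S' hS' hne
    obtain ⟨R, hR, rfl⟩ := Finset.mem_image.1 hS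
    obtain ⟨R', hR', rfl⟩ := Finset.mem_image.1 hS'
    exact hTdisj R (hP' hR) R' (hP' hR') fun h => hne (h ▸ rfl)
  have hne_image : ∀ P' ⊆ P, ∀ S ∈ P'.image T, S.Nonempty := by
    intro P' hP' S hS
    obtain ⟨R, hR, rfl⟩ := Finset.mem_image.1 hS
    exact hTne R (hP' hR)
  have hB : valid B := by
    refine ⟨?_, hne_image PB hPBsub, hdisj_image PB hPBsub, ?_⟩
    · obtain ⟨S, hS, hSd⟩ := hlow
      exact ⟨T S, Finset.mem_image_of_mem T (Finset.mem_filter.2 ⟨hS, hSd⟩)⟩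
    · rw [hBcard, hBsum]
      nlinarith
  have hpB : p ∈ ⋂ S ∈ B, g '' simpFace S := by
    simp only [Set.mem_iInter]
    intro S hS
    obtain ⟨R, hR, rfl⟩ := Finset.mem_image.1 hS
    exact himg R (hPBsub R hR) (Finset.mem_filter.1 hR).2
  have hTle : ∀ S ∈ P, (T S).card ≤ d + 1 := by
    intro S hS
    by_contra! hlt
    have hSA : S ∈ PA := Finset.mem_filter.2 ⟨hS, by omega⟩
    have hA' : PA.card * (d + 1) < ∑ S ∈ PA, (T S).card := by
      simpa using Finset.sum_lt_sum (f := fun _ => d + 1) (s := PA)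
        (fun S hS => not_le.1 (Finset.mem_filter.1 hS).2) ⟨S, hSA, hlt⟩
    have := (hgen B hB.1 hB.2.1 hB.2.2.1 hB.2.2.2).2 (by
      rw [hBcard, hBsum]
      nlinarith)
    exact Set.notMem_empty p (this ▸ hpB)
  refine hw (P.image T) ⟨?_, hne_image P subset_rfl, fun S hS => ?_, hdisj_image P subset_rfl,
    p, fun S hS => ?_⟩
  · rw [Finset.card_image_of_injOn hTinj, hPcard]
  · obtain ⟨R, hR, rfl⟩ := Finset.mem_image.1 hS
    exact hTle R hR
  · obtain ⟨R, hR, rfl⟩ := Finset.mem_image.1 hS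
    refine ⟨himg R hR, fun hc => ?_⟩
    by_contra hW
    refine hΓW p (Set.mem_iUnion₂.2 ⟨B, hB, hpB⟩) (T R) hc hW (z R ∘ ι)
      (fun i => (hz R hR).1.1 _) (fun i hi => ?_) (σ (z R)) (hσle R hR) (hsum R hR) (hσδ R hR)
      (fun h => ?_) (hzp R hR)
    · by_contra h
      exact hi ((hTmem R i).2 h)
    · have := (hδ R).2 h
      omega

end Lifting

/-- The Winding Number Conjecture is equivalent to the Topological Tverberg Theorem. -/
theorem winding_iff_topologicalTverberg :
    (∀ d q : ℕ, 1 ≤ d → 1 ≤ q →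
      ∀ f : (Fin ((d+1)*(q-1)+1) → ℝ) → Euc d,
        ContinuousOn f (skel ((d+1)*(q-1)) (d-1)) →
        ∃ P : Finset (Finset (Fin ((d+1)*(q-1)+1))), IsWindingPartition d q f P) ↔
    (∀ d q : ℕ, 1 ≤ d → 1 ≤ q →
      ∀ F : (Fin ((d+1)*(q-1)+1) → ℝ) → Euc d,
        ContinuousOn F (stdSimp ((d+1)*(q-1))) →
        ∃ P : Finset (Finset (Fin ((d+1)*(q-1)+1))), IsTverbergPartition q F P) := by
  constructor
  · intro h d q hd hq F hF
    obtain ⟨P, hP⟩ := h d q hd hq F (hF.mono fun x hx => hx.1)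
    exact ⟨P, hP.isTverbergPartition hF⟩
  · intro h d q hd hq f hf
    by_contra! hw
    have hN : (d + 1) * (q - 1) + 1 < q * (d + 1) := by
      obtain ⟨k, rfl⟩ : ∃ k, q = k + 1 := ⟨q - 1, by omega⟩
      rw [Nat.add_sub_cancel]
      nlinarith
    obtain ⟨ε, hε, hstable⟩ := exists_forall_not_isWindingPartition hd hN hf (not_exists.2 hw)
    obtain ⟨f', hf', hff'⟩ := exists_continuous_extension (isClosed_skel (d - 1)) hf
    obtain ⟨g, hg, hgf, hgen⟩ := exists_generic_approx hf' hε
    obtain ⟨F, hF, hFP⟩ := exists_forall_not_isTverbergPartition hd hq rfl rfl hg hgen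
      (not_exists.1 (hstable g hg.continuousOn fun x hx => hff' x hx ▸ hgf x hx.1))
    obtain ⟨P, hP⟩ := h (d + 1) q (by omega) hq F hF.continuousOn
    exact hFP P hP
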